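/- (Li–Li matrix inequality.) One has Σ_{α,β=1}^{k} ‖A_α A_β − A_β A_α‖² + Σ_{α,β=1}^{k} (tr(A_α A_β))² ≤ (3/2)(Σ_{α=1}^{k} ‖A_α‖²)². -/

import Mathlib

/-!
Both sides are invariant under an orthogonal change of the family `A_1, …, A_k`, so the Gram matrix
`tr (A_α A_β)` may be assumed diagonal. Put `x_α = ‖A_α‖²`.

The main estimate (`sum_frobSq_commutator_le`) is due to Zhiqin Lu: if the `B_a` are symmetric,
pairwise orthogonal and `‖B_a‖² ≤ M`, then `∑ ‖[A, B_a]‖² ≤ ‖A‖² (∑ ‖B_a‖² + M)` for every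
symmetric `A`. After conjugation `A = diag (λ_i)`, and the left side is
`½ ∑_{i,j} w_ij (λ_i - λ_j)²` with `w_ij = 2 ∑_a (B_a)_ij²` for `i ≠ j`. Bessel's inequality gives
`w_ij ≤ M`, and the bound becomes an estimate of the largest eigenvalue of a weighted graph
Laplacian (`laplacian_le`), of Anderson–Morley type: it is at most the largest value of
`d_i + d_j` over the edges `ij`, where `d_i` is the weighted degree.

Order the matrices so that `x_1 ≥ x_2 ≥ …` and apply the estimate to each `A_i` and its successors:
`∑_{i,j} ‖[A_i, A_j]‖² ≤ 2 ∑_{i<j} x_i x_j + 2 ∑_i x_i x_{i+1}`. The last sum is at most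
`(x_1 + x_3 + ⋯)(x_2 + x_4 + ⋯) ≤ ¼ (∑ x_i)²`, and the Li–Li inequality follows.
-/

open Finset

/-- Squared Frobenius norm of a real matrix. -/
def frobSq {m : ℕ} (M : Matrix (Fin m) (Fin m) ℝ) : ℝ := ∑ i, ∑ j, (M i j) ^ 2

open Matrix

/-! ### The Frobenius norm -/

section Frobenius

variable {m : ℕ}

lemma frobSq_eq_trace (M : Matrix (Fin m) (Fin m) ℝ) : frobSq M = (Mᵀ * M).trace := by
  unfold frobSq
  rw [Finset.sum_comm]
  simp [Matrix.trace, Matrix.mul_apply, sq]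

lemma frobSq_nonneg (M : Matrix (Fin m) (Fin m) ℝ) : 0 ≤ frobSq M := by
  unfold frobSq; positivity

lemma frobSq_conj (U M : Matrix (Fin m) (Fin m) ℝ) (hU : U * Uᵀ = 1) :
    frobSq (Uᵀ * M * U) = frobSq M := by
  rw [frobSq_eq_trace, frobSq_eq_trace]
  have : (Uᵀ * M * U)ᵀ * (Uᵀ * M * U) = Uᵀ * (Mᵀ * M * U) := by
    simp only [Matrix.transpose_mul, Matrix.transpose_transpose]
    calc Uᵀ * (Mᵀ * U) * (Uᵀ * M * U) = Uᵀ * Mᵀ * (U * Uᵀ) * M * U := by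
          simp only [Matrix.mul_assoc]
      _ = _ := by rw [hU]; simp only [Matrix.mul_one, Matrix.mul_assoc]
  rw [this, Matrix.trace_mul_comm, Matrix.mul_assoc, hU, Matrix.mul_one]

lemma frobSq_comm_swap (X Y : Matrix (Fin m) (Fin m) ℝ) :
    frobSq (X * Y - Y * X) = frobSq (Y * X - X * Y) := by
  unfold frobSq
  simp only [Matrix.sub_apply, sub_sq_comm]

end Frobenius

/-- Diagonalization of a real symmetric matrix by an orthogonal matrix. -/
lemma exists_orthogonal_diagonal {n : ℕ} (A : Matrix (Fin n) (Fin n) ℝ) (hA : A.IsSymm) :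
    ∃ U : Matrix (Fin n) (Fin n) ℝ, ∃ d : Fin n → ℝ,
      U * Uᵀ = 1 ∧ Uᵀ * A * U = Matrix.diagonal d := by
  have hA' : A.IsHermitian := by
    rw [Matrix.IsHermitian, Matrix.conjTranspose_eq_transpose_of_trivial]; exact hA
  refine ⟨hA'.eigenvectorUnitary, hA'.eigenvalues, ?_, ?_⟩
  · have := Unitary.coe_mul_star_self hA'.eigenvectorUnitary
    rwa [Unitary.coe_star, Matrix.star_eq_conjTranspose, Matrix.conjTranspose_eq_transpose_of_trivial] at this
  · have := hA'.conjStarAlgAut_star_eigenvectorUnitary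
    rw [Unitary.conjStarAlgAut_star_apply, Matrix.star_eq_conjTranspose,
      Matrix.conjTranspose_eq_transpose_of_trivial] at this
    rw [this]
    rfl

/-- Pythagoras for pairwise orthogonal symmetric matrices. -/
lemma frobSq_sum_smul {m : ℕ} {ι : Type*} (s : Finset ι)
    (B : ι → Matrix (Fin m) (Fin m) ℝ) (hB : ∀ a, (B a).IsSymm)
    (ho : ∀ a b, a ≠ b → (B a * B b).trace = 0) (t : ι → ℝ) :
    frobSq (∑ a ∈ s, t a • B a) = ∑ a ∈ s, t a ^ 2 * frobSq (B a) := by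
  classical
  have hB' : ∀ a, (B a)ᵀ = B a := hB
  simp only [frobSq_eq_trace, Matrix.transpose_sum, Matrix.transpose_smul, hB', Finset.sum_mul,
    Finset.mul_sum, Matrix.trace_sum, Matrix.smul_mul, Matrix.mul_smul, Matrix.trace_smul,
    smul_eq_mul]
  refine Finset.sum_congr rfl fun a ha => ?_
  rw [Finset.sum_eq_single_of_mem a ha]
  · ring
  · intro b _ hb
    rw [ho b a hb]; ring

/-- Bessel's inequality, tested on the symmetric matrix unit `E_ij + E_ji`. -/
lemma two_mul_sum_entry_sq_le {m : ℕ} {ι : Type*} (s : Finset ι)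
    (B : ι → Matrix (Fin m) (Fin m) ℝ) (hB : ∀ a, (B a).IsSymm)
    (ho : ∀ a b, a ≠ b → (B a * B b).trace = 0) (M : ℝ) (hM : 0 ≤ M)
    (hBM : ∀ a ∈ s, frobSq (B a) ≤ M) (i j : Fin m) (hij : i ≠ j) :
    2 * ∑ a ∈ s, (B a i j) ^ 2 ≤ M := by
  set T := ∑ a ∈ s, (B a i j) ^ 2 with hT
  have hT0 : 0 ≤ T := by positivity
  set C := ∑ a ∈ s, B a i j • B a with hC
  have h1 : frobSq C ≤ M * T := by
    rw [hC, frobSq_sum_smul s B hB ho, hT, Finset.mul_sum]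
    refine Finset.sum_le_sum fun a ha => ?_
    nlinarith [hBM a ha, sq_nonneg (B a i j)]
  have hCij : C i j = T := by
    simp [hC, hT, Matrix.sum_apply, sq]
  have hCji : C j i = T := by
    simp only [hC, hT, Matrix.sum_apply, Matrix.smul_apply, smul_eq_mul, sq]
    exact Finset.sum_congr rfl fun a _ => by rw [(hB a).apply i j]
  have h2 : 2 * T ^ 2 ≤ frobSq C := by
    have hle : ∀ p q, (C p q) ^ 2 ≤ ∑ q, (C p q) ^ 2 := fun p q =>
      Finset.single_le_sum (f := fun q => (C p q) ^ 2) (fun _ _ => sq_nonneg _)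
        (Finset.mem_univ q)
    have := Finset.sum_le_sum_of_subset_of_nonneg (f := fun p => ∑ q, (C p q) ^ 2)
      (Finset.subset_univ {i, j}) (fun _ _ _ => by positivity)
    rw [Finset.sum_pair hij] at this
    have a1 := hle i j
    have a2 := hle j i
    rw [hCij] at a1
    rw [hCji] at a2
    unfold frobSq
    linarith
  rcases hT0.eq_or_lt with h | h
  · rw [← h]; simpa using hM
  · nlinarith

/-! ### A Laplacian eigenvalue bound -/

/-- In a weighted graph with edge weights at most `M`, the degrees of the ends of an edge add up to
at most the total edge weight plus `M`: only the edge itself is counted twice. -/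
lemma degree_add_degree_le {n : ℕ} (w : Fin n → Fin n → ℝ) (hs : ∀ i j, w i j = w j i)
    (h0 : ∀ i j, 0 ≤ w i j) (hd : ∀ i, w i i = 0) (M : ℝ)
    (hM : ∀ i j, i ≠ j → w i j ≤ M) (i j : Fin n) (hij : i ≠ j) :
    ∑ k, w i k + ∑ k, w j k ≤ (∑ p, ∑ q, w p q) / 2 + M := by
  have hf : ∀ k, 0 ≤ (∑ q, w k q) - w k i - w k j := by
    intro k
    have := Finset.sum_le_sum_of_subset_of_nonneg (f := fun q => w k q)
      (Finset.subset_univ {i, j}) (fun _ _ _ => h0 _ _)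
    rw [Finset.sum_pair hij] at this
    linarith
  have := Finset.sum_le_sum_of_subset_of_nonneg (f := fun k => (∑ q, w k q) - w k i - w k j)
      (Finset.subset_univ {i, j}) (fun _ _ _ => hf _)
  rw [Finset.sum_pair hij, Finset.sum_sub_distrib, Finset.sum_sub_distrib] at this
  have ei : ∑ k, w k i = ∑ k, w i k := Finset.sum_congr rfl fun k _ => hs k i
  have ej : ∑ k, w k j = ∑ k, w j k := Finset.sum_congr rfl fun k _ => hs k j
  rw [ei, ej, hd, hd, hs j i] at this
  have hw := hM i j hij
  linarith

/-- The quadratic form of a weighted graph Laplacian is at most (total edge weight `+ M`) times the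
squared norm. Sums over ordered pairs count every edge twice. -/
lemma laplacian_le {n : ℕ} (w : Fin n → Fin n → ℝ) (hs : ∀ i j, w i j = w j i)
    (h0 : ∀ i j, 0 ≤ w i j) (hd : ∀ i, w i i = 0) (M : ℝ) (hM0 : 0 ≤ M)
    (hM : ∀ i j, i ≠ j → w i j ≤ M) (l : Fin n → ℝ) :
    ∑ i, ∑ j, w i j * (l i - l j) ^ 2 ≤ (∑ i, ∑ j, w i j + 2 * M) * ∑ i, l i ^ 2 := by
  set Q := ∑ i, ∑ j, w i j * (l i - l j) ^ 2 with hQ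
  set W := ∑ i, ∑ j, w i j with hW
  set L := ∑ i, l i ^ 2 with hL
  set g : Fin n → ℝ := fun i => ∑ j, w i j * (l i - l j) with hg
  have hQ0 : 0 ≤ Q := Finset.sum_nonneg fun i _ => Finset.sum_nonneg fun j _ =>
    mul_nonneg (h0 i j) (sq_nonneg _)
  have hW0 : 0 ≤ W := Finset.sum_nonneg fun i _ => Finset.sum_nonneg fun j _ => h0 i j
  have hL0 : 0 ≤ L := by positivity
  have hQg : Q = 2 * ∑ i, l i * g i := by
    have e1 : ∑ i, l i * g i = ∑ i, ∑ j, l i * (w i j * (l i - l j)) := by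
      simp only [hg, Finset.mul_sum]
    have e2 : ∑ i, l i * g i = ∑ i, ∑ j, l j * (w i j * (l j - l i)) := by
      rw [e1, Finset.sum_comm]
      exact Finset.sum_congr rfl fun i _ => Finset.sum_congr rfl fun j _ => by rw [hs i j]
    have : Q = ∑ i, l i * g i + ∑ i, l i * g i := by
      conv_rhs => rw [e1]
      conv_rhs => arg 2; rw [← e1, e2]
      rw [← Finset.sum_add_distrib]
      refine Finset.sum_congr rfl fun i _ => ?_
      rw [← Finset.sum_add_distrib]
      exact Finset.sum_congr rfl fun j _ => by ring
    linarith
  have hcs : (∑ i, l i * g i) ^ 2 ≤ L * ∑ i, g i ^ 2 := Finset.sum_mul_sq_le_sq_mul_sq _ _ _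
  have hg2 : ∀ i, g i ^ 2 ≤ (∑ k, w i k) * ∑ j, w i j * (l i - l j) ^ 2 := by
    intro i
    refine Finset.sum_sq_le_sum_mul_sum_of_sq_le_mul _ (fun j _ => h0 i j)
      (fun j _ => mul_nonneg (h0 i j) (sq_nonneg _)) (fun j _ => le_of_eq (by ring))
  have hG : ∑ i, g i ^ 2 ≤ (W / 2 + M) * Q / 2 := by
    have e1 : ∑ i, (∑ k, w i k) * ∑ j, w i j * (l i - l j) ^ 2
        = ∑ i, ∑ j, (∑ k, w i k) * (w i j * (l i - l j) ^ 2) := by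
      simp only [Finset.mul_sum]
    have e2 : ∑ i, (∑ k, w i k) * ∑ j, w i j * (l i - l j) ^ 2
        = ∑ i, ∑ j, (∑ k, w j k) * (w i j * (l i - l j) ^ 2) := by
      rw [e1, Finset.sum_comm]
      exact Finset.sum_congr rfl fun i _ => Finset.sum_congr rfl fun j _ => by
        rw [hs i j]; ring
    have e3 : ∑ i, ∑ j, (∑ k, w i k) * (w i j * (l i - l j) ^ 2)
        + ∑ i, ∑ j, (∑ k, w j k) * (w i j * (l i - l j) ^ 2) ≤ (W / 2 + M) * Q := by
      rw [← Finset.sum_add_distrib, hQ, Finset.mul_sum]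
      refine Finset.sum_le_sum fun i _ => ?_
      rw [← Finset.sum_add_distrib, Finset.mul_sum]
      refine Finset.sum_le_sum fun j _ => ?_
      rcases eq_or_ne i j with rfl | hij
      · simp
      · rw [← add_mul]
        exact mul_le_mul_of_nonneg_right (degree_add_degree_le w hs h0 hd M hM i j hij)
          (mul_nonneg (h0 i j) (sq_nonneg _))
    have := Finset.sum_le_sum fun i (_ : i ∈ Finset.univ) => hg2 i
    linarith
  have hfin : Q ^ 2 ≤ ((W + 2 * M) * L) * Q := by
    have := mul_le_mul_of_nonneg_left hG hL0
    calc Q ^ 2 = 4 * (∑ i, l i * g i) ^ 2 := by rw [hQg]; ring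
      _ ≤ 4 * (L * ((W / 2 + M) * Q / 2)) := by linarith
      _ = _ := by ring
  rcases hQ0.eq_or_lt with h | h
  · rw [← h]; positivity
  · nlinarith

/-! ### Lu's commutator inequality -/

lemma sum_sum_sum_comm {m : ℕ} {ι : Type*} (s : Finset ι) (F : ι → Fin m → Fin m → ℝ) :
    ∑ a ∈ s, ∑ i, ∑ j, F a i j = ∑ i, ∑ j, ∑ a ∈ s, F a i j := by
  rw [Finset.sum_comm]
  exact Finset.sum_congr rfl fun i _ => Finset.sum_comm

/-- Lu's inequality for a diagonal matrix. -/
lemma sum_frobSq_commutator_diagonal_le {m : ℕ} {ι : Type*} (s : Finset ι) (l : Fin m → ℝ)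
    (B : ι → Matrix (Fin m) (Fin m) ℝ) (hB : ∀ a, (B a).IsSymm)
    (ho : ∀ a b, a ≠ b → (B a * B b).trace = 0) (M : ℝ) (hM : 0 ≤ M)
    (hBM : ∀ a ∈ s, frobSq (B a) ≤ M) :
    ∑ a ∈ s, frobSq (Matrix.diagonal l * B a - B a * Matrix.diagonal l)
      ≤ frobSq (Matrix.diagonal l) * (∑ a ∈ s, frobSq (B a) + M) := by
  set w : Fin m → Fin m → ℝ := fun i j => if i = j then 0 else 2 * ∑ a ∈ s, (B a i j) ^ 2 with hw
  have hsum0 : ∀ i j, 0 ≤ ∑ a ∈ s, (B a i j) ^ 2 := fun i j => by positivity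
  have key := laplacian_le w
    (fun i j => by
      simp only [hw, eq_comm (a := i)]
      split_ifs
      · rfl
      · congr 1; exact Finset.sum_congr rfl fun a _ => by rw [(hB a).apply i j])
    (fun i j => by
      simp only [hw]; split_ifs
      · exact le_rfl
      · linarith [hsum0 i j])
    (fun i => by simp [hw]) M hM
    (fun i j hij => by
      simp only [hw, if_neg hij]
      exact two_mul_sum_entry_sq_le s B hB ho M hM hBM i j hij) l
  have h1 : frobSq (Matrix.diagonal l) = ∑ i, l i ^ 2 := by
    simp [frobSq, Matrix.diagonal_apply, ite_pow]
  have h2 : ∑ i, ∑ j, w i j * (l i - l j) ^ 2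
      = 2 * ∑ a ∈ s, frobSq (Matrix.diagonal l * B a - B a * Matrix.diagonal l) := by
    unfold frobSq
    rw [sum_sum_sum_comm s, Finset.mul_sum]
    refine Finset.sum_congr rfl fun i _ => ?_
    rw [Finset.mul_sum]
    refine Finset.sum_congr rfl fun j _ => ?_
    simp only [hw, Matrix.sub_apply, Matrix.diagonal_mul, Matrix.mul_diagonal]
    split_ifs with h
    · subst h
      simp [mul_comm]
    · rw [mul_assoc, Finset.sum_mul]
      congr 1
      exact Finset.sum_congr rfl fun a _ => by ring
  have h3 : ∑ i, ∑ j, w i j ≤ 2 * ∑ a ∈ s, frobSq (B a) := by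
    unfold frobSq
    rw [sum_sum_sum_comm s, Finset.mul_sum]
    refine Finset.sum_le_sum fun i _ => ?_
    rw [Finset.mul_sum]
    refine Finset.sum_le_sum fun j _ => ?_
    simp only [hw]
    split_ifs
    · linarith [hsum0 i j]
    · exact le_rfl
  rw [h2] at key
  rw [h1]
  have hL : 0 ≤ ∑ i, l i ^ 2 := by positivity
  nlinarith [mul_le_mul_of_nonneg_right h3 hL]

/-- Lu's inequality: commutators of a symmetric matrix with pairwise orthogonal symmetric matrices
of squared norm at most `M`. -/
lemma sum_frobSq_commutator_le {m : ℕ} {ι : Type*} (s : Finset ι)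
    (A : Matrix (Fin m) (Fin m) ℝ) (hA : A.IsSymm)
    (B : ι → Matrix (Fin m) (Fin m) ℝ) (hB : ∀ a, (B a).IsSymm)
    (ho : ∀ a b, a ≠ b → (B a * B b).trace = 0) (M : ℝ) (hM : 0 ≤ M)
    (hBM : ∀ a ∈ s, frobSq (B a) ≤ M) :
    ∑ a ∈ s, frobSq (A * B a - B a * A) ≤ frobSq A * (∑ a ∈ s, frobSq (B a) + M) := by
  obtain ⟨U, d, hU, hd⟩ := exists_orthogonal_diagonal A hA
  have hmul : ∀ X Y : Matrix (Fin m) (Fin m) ℝ,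
      (Uᵀ * X * U) * (Uᵀ * Y * U) = Uᵀ * (X * Y) * U := by
    intro X Y
    calc (Uᵀ * X * U) * (Uᵀ * Y * U) = Uᵀ * X * (U * Uᵀ) * Y * U := by
          simp only [Matrix.mul_assoc]
      _ = _ := by rw [hU]; simp only [Matrix.mul_one, Matrix.mul_assoc]
  have := sum_frobSq_commutator_diagonal_le s d (fun a => Uᵀ * B a * U)
    (fun a => by
      have h : (B a)ᵀ = B a := hB a
      simp [Matrix.IsSymm, Matrix.transpose_mul, h, Matrix.mul_assoc])
    (fun a b hab => by
      rw [hmul, Matrix.mul_assoc, Matrix.trace_mul_comm, Matrix.mul_assoc, hU, Matrix.mul_one,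
        ho a b hab]) M hM
    (fun a ha => by rw [frobSq_conj U _ hU]; exact hBM a ha)
  simp only [← hd, hmul, ← Matrix.sub_mul, ← Matrix.mul_sub, frobSq_conj U _ hU] at this
  exact this

/-! ### Orthogonal families and change of basis -/

/-- The commutator bound for an orthogonal family, by adding the matrices in order of increasing
norm. The numbers `o` and `e` stand for `x_1 + x_3 + ⋯` and `x_2 + x_4 + ⋯`, where
`x_1 ≥ x_2 ≥ ⋯` are the squared norms. -/
lemma exists_sum_commutator_le {m : ℕ} {ι : Type*} [DecidableEq ι]
    (B : ι → Matrix (Fin m) (Fin m) ℝ) (hB : ∀ a, (B a).IsSymm)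
    (ho : ∀ a b, a ≠ b → (B a * B b).trace = 0) (s : Finset ι) :
    ∃ o e : ℝ, 0 ≤ o ∧ 0 ≤ e ∧ o + e = ∑ a ∈ s, frobSq (B a) ∧ (∀ a ∈ s, frobSq (B a) ≤ o) ∧
      ∑ a ∈ s, ∑ b ∈ s, frobSq (B a * B b - B b * B a) + ∑ a ∈ s, frobSq (B a) ^ 2
        ≤ (∑ a ∈ s, frobSq (B a)) ^ 2 + 2 * (o * e) := by
  induction s using Finset.induction_on_max_value (fun a => frobSq (B a)) with
  | empty => exact ⟨0, 0, by simp⟩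
  | insert a s has hmax ih =>
    obtain ⟨o, e, ho0, he0, hoe, hle, hE⟩ := ih
    have ha0 := frobSq_nonneg (B a)
    -- The new matrix has the largest norm, so the parities of all positions are exchanged.
    refine ⟨e + frobSq (B a), o, by linarith, ho0, ?_, ?_, ?_⟩
    · rw [Finset.sum_insert has]; linarith
    · intro b hb
      rcases Finset.mem_insert.1 hb with rfl | hb
      · linarith
      · linarith [hmax b hb]
    · have hlu := sum_frobSq_commutator_le s (B a) (hB a) B hB ho o ho0 hle
      have hsw : ∑ b ∈ s, frobSq (B b * B a - B a * B b)
          = ∑ b ∈ s, frobSq (B a * B b - B b * B a) :=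
        Finset.sum_congr rfl fun b _ => frobSq_comm_swap _ _
      have hself : frobSq (B a * B a - B a * B a) = 0 := by simp [frobSq]
      simp only [Finset.sum_insert has, Finset.sum_add_distrib, hself, hsw]
      nlinarith

/-- An orthogonal change of basis preserves the sum of squares. -/
lemma sum_sq_orthogonal {k : ℕ} (U : Matrix (Fin k) (Fin k) ℝ) (hU : U * Uᵀ = 1)
    (v : Fin k → ℝ) : ∑ b, (∑ a, U a b * v a) ^ 2 = ∑ a, v a ^ 2 := by
  have h : (v ᵥ* U) ⬝ᵥ (v ᵥ* U) = v ⬝ᵥ v := by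
    rw [← Matrix.mulVec_transpose U v, Matrix.dotProduct_mulVec,
      Matrix.vecMul_transpose, Matrix.mulVec_mulVec, hU, Matrix.one_mulVec]
  simpa [dotProduct, Matrix.vecMul, sq, mul_comm] using h

lemma sum_frobSq_orthogonal {m k : ℕ} (U : Matrix (Fin k) (Fin k) ℝ) (hU : U * Uᵀ = 1)
    (X : Fin k → Matrix (Fin m) (Fin m) ℝ) :
    ∑ b, frobSq (∑ a, U a b • X a) = ∑ a, frobSq (X a) := by
  unfold frobSq
  rw [sum_sum_sum_comm, sum_sum_sum_comm]
  refine Finset.sum_congr rfl fun i _ => ?_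
  refine Finset.sum_congr rfl fun j _ => ?_
  simp only [Matrix.sum_apply, Matrix.smul_apply, smul_eq_mul]
  exact sum_sq_orthogonal U hU _

/-- **Li–Li matrix inequality.** For symmetric traceless real `m×m` matrices `A_1, …, A_k`,
`Σ_{α,β} ‖A_α A_β − A_β A_α‖² + Σ_{α,β} (tr(A_α A_β))² ≤ (3/2)(Σ_α ‖A_α‖²)²`. -/
theorem li_li_matrix_inequality
    (m k : ℕ) (hm : 1 ≤ m) (hk : 1 ≤ k)
    (A : Fin k → Matrix (Fin m) (Fin m) ℝ)
    (hsymm : ∀ α, (A α).IsSymm)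
    (htr : ∀ α, (A α).trace = 0) :
    (∑ α, ∑ β, frobSq (A α * A β - A β * A α))
      + (∑ α, ∑ β, (Matrix.trace (A α * A β)) ^ 2)
      ≤ (3 / 2) * (∑ α, frobSq (A α)) ^ 2 := by
  have hA' : ∀ a, (A a)ᵀ = A a := hsymm
  set G : Matrix (Fin k) (Fin k) ℝ := Matrix.of fun a b => (A a * A b).trace with hG
  obtain ⟨U, d, hU, hd⟩ := exists_orthogonal_diagonal G
    (by ext a b; simp [hG, Matrix.trace_mul_comm (A a)])
  set B : Fin k → Matrix (Fin m) (Fin m) ℝ := fun b => ∑ a, U a b • A a with hBdef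
  have hB : ∀ b, (B b).IsSymm := fun b => by
    simp [Matrix.IsSymm, hBdef, Matrix.transpose_sum, hA']
  have hB' : ∀ a, (B a)ᵀ = B a := hB
  have hgram : ∀ a b, (B a * B b).trace = Matrix.diagonal d a b := by
    intro a b
    have hent : (Uᵀ * G * U) a b = ∑ j, (∑ i, U i a * G i j) * U j b := by
      simp [Matrix.mul_apply]
    rw [← hd, hent]
    simp only [hBdef, hG, Matrix.of_apply, Finset.sum_mul, Finset.mul_sum, Matrix.trace_sum,
      Matrix.smul_mul, Matrix.mul_smul, Matrix.trace_smul, smul_eq_mul]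
    refine Finset.sum_congr rfl fun i _ => ?_
    refine Finset.sum_congr rfl fun j _ => ?_
    ring
  have ho : ∀ a b, a ≠ b → (B a * B b).trace = 0 := fun a b hab => by
    rw [hgram, Matrix.diagonal_apply_ne _ hab]
  obtain ⟨o, e, -, -, hoe, -, hE⟩ := exists_sum_commutator_le B hB ho Finset.univ
  have hN : ∑ b, frobSq (B b) = ∑ a, frobSq (A a) := sum_frobSq_orthogonal U hU A
  have hone : ∀ X : Matrix (Fin m) (Fin m) ℝ, ∑ b, frobSq (B b * X - X * B b)
      = ∑ a, frobSq (A a * X - X * A a) := by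
    intro X
    rw [← sum_frobSq_orthogonal U hU (fun a => A a * X - X * A a)]
    refine Finset.sum_congr rfl fun b _ => ?_
    simp only [hBdef, Finset.sum_mul, Finset.mul_sum, smul_sub, Finset.sum_sub_distrib,
      Matrix.smul_mul, Matrix.mul_smul]
  have hC : ∑ a, ∑ b, frobSq (B a * B b - B b * B a)
      = ∑ a, ∑ b, frobSq (A a * A b - A b * A a) := by
    rw [Finset.sum_comm]
    simp only [hone]
    rw [Finset.sum_comm]
    simp only [frobSq_comm_swap (A _) (B _), hone]
    exact Finset.sum_congr rfl fun a _ => Finset.sum_congr rfl fun b _ => frobSq_comm_swap _ _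
  have hT : ∑ a, ∑ b, ((A a * A b).trace) ^ 2 = ∑ a, frobSq (B a) ^ 2 := by
    have h1 := frobSq_conj U G hU
    rw [hd] at h1
    have h2 : ∀ a, frobSq (B a) = d a := fun a => by
      rw [frobSq_eq_trace, hB', hgram, Matrix.diagonal_apply_eq]
    simp only [h2]
    have h3 : frobSq (Matrix.diagonal d) = ∑ a, d a ^ 2 := by
      simp [frobSq, Matrix.diagonal_apply, ite_pow]
    rw [← h3, h1]
    rfl
  rw [hC, ← hT, hN] at hE
  rw [hN] at hoe
  rw [← hoe] at hE ⊢
  nlinarith [sq_nonneg (o - e)]
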